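/- arXiv:1302.5573 — 3 statements merged into one kernel-verified Lean document; each statement's English description precedes it below -/
import Mathlib

section
/- Let r, τ, λ be positive real numbers with τ − rλ > 0, and let Δ = {(x, y) ∈ ℝ² : 0 ≤ y ≤ λ, 0 ≤ x, x + r y ≤ τ}. For every b = (b₁, b₂) ∈ ℝ² satisfying r b₁ = 2 b₂ (a mass linear pair), the inner product of the mass center of Δ with b equals ⟨Cm(Δ), b⟩ = b₁ τ / 2. (This is the computation in the paper's Hirzebruch-surface Example showing that for a mass linear lattice vector b the invariant is Λ(φ_b) = exp(π i b₁ τ), so that φ_b is homotopically nontrivial when b₁τ is odd.) -/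
open MeasureTheory

/-- For the Hirzebruch trapezoid `Δ` and a mass linear vector `b = (b₁,b₂)` with
`r b₁ = 2 b₂`, the inner product of the mass center of `Δ` with `b` equals `b₁ τ / 2`. -/
theorem stmt10 (r τ lam : ℝ) (hr : 0 < r) (hτ : 0 < τ) (hlam : 0 < lam)
    (hσ : 0 < τ - r * lam)
    (Δ : Set (ℝ × ℝ))
    (hΔ : Δ = {p : ℝ × ℝ | 0 ≤ p.2 ∧ p.2 ≤ lam ∧ 0 ≤ p.1 ∧ p.1 + r * p.2 ≤ τ})
    (b₁ b₂ : ℝ) (hb : r * b₁ = 2 * b₂) :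
    ((∫ p in Δ, p.1) / (volume Δ).toReal) * b₁
      + ((∫ p in Δ, p.2) / (volume Δ).toReal) * b₂ = b₁ * τ / 2 := by
  have hclosed : IsClosed Δ := by
    rw [hΔ]
    have c1 : IsClosed {p : ℝ × ℝ | 0 ≤ p.2} := isClosed_le (by fun_prop) (by fun_prop)
    have c2 : IsClosed {p : ℝ × ℝ | p.2 ≤ lam} := isClosed_le (by fun_prop) (by fun_prop)
    have c3 : IsClosed {p : ℝ × ℝ | 0 ≤ p.1} := isClosed_le (by fun_prop) (by fun_prop)
    have c4 : IsClosed {p : ℝ × ℝ | p.1 + r * p.2 ≤ τ} :=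
      isClosed_le (by fun_prop) (by fun_prop)
    exact c1.inter (c2.inter (c3.inter c4))
  have hsub : Δ ⊆ Set.Icc 0 τ ×ˢ Set.Icc 0 lam := by
    rw [hΔ]
    rintro ⟨x, y⟩ ⟨h1, h2, h3, h4⟩
    simp only at h1 h2 h3 h4
    have := mul_nonneg hr.le h1
    exact ⟨⟨h3, by simp only; linarith⟩, ⟨h1, h2⟩⟩
  have hcomp : IsCompact Δ := (isCompact_Icc.prod isCompact_Icc).of_isClosed_subset hclosed hsub
  have hmeas : MeasurableSet Δ := hclosed.measurableSet
  have hfin : volume Δ ≠ ⊤ := hcomp.measure_lt_top.ne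
  have hpos : 0 < (volume Δ).toReal := by
    refine ENNReal.toReal_pos ?_ hfin
    have hs : Set.Ioo 0 (τ - r * lam) ×ˢ Set.Ioo 0 lam ⊆ Δ := by
      rw [hΔ]
      rintro ⟨x, y⟩ ⟨⟨h1, h2⟩, ⟨h3, h4⟩⟩
      simp only at h1 h2 h3 h4
      have := mul_le_mul_of_nonneg_left h4.le hr.le
      exact ⟨h3.le, h4.le, h1.le, by simp only; linarith⟩
    have ho : 0 < volume (Set.Ioo 0 (τ - r * lam) ×ˢ Set.Ioo 0 lam) :=
      (isOpen_Ioo.prod isOpen_Ioo).measure_pos volume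
        ((Set.nonempty_Ioo.2 hσ).prod (Set.nonempty_Ioo.2 hlam))
    exact (ho.trans_le (measure_mono hs)).ne'
  have i1 : IntegrableOn (fun p : ℝ × ℝ => p.1) Δ :=
    (by fun_prop : Continuous (fun p : ℝ × ℝ => p.1)).continuousOn.integrableOn_compact hcomp
  have i2 : IntegrableOn (fun p : ℝ × ℝ => p.2) Δ :=
    (by fun_prop : Continuous (fun p : ℝ × ℝ => p.2)).continuousOn.integrableOn_compact hcomp
  have ig : IntegrableOn (fun p : ℝ × ℝ => p.1 * b₁ + p.2 * b₂ - b₁ * τ / 2) Δ :=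
    (by fun_prop : Continuous (fun p : ℝ × ℝ => p.1 * b₁ + p.2 * b₂ - b₁ * τ / 2)
      ).continuousOn.integrableOn_compact hcomp
  have key : ∫ p in Δ, (p.1 * b₁ + p.2 * b₂ - b₁ * τ / 2) = 0 := by
    rw [← integral_indicator hmeas, Measure.volume_eq_prod, integral_prod_symm]
    · refine integral_eq_zero_of_ae (Filter.Eventually.of_forall fun y => ?_)
      simp only [Pi.zero_apply]
      by_cases hy : 0 ≤ y ∧ y ≤ lam
      · have hL : 0 ≤ τ - r * y := by
          have := mul_le_mul_of_nonneg_left hy.2 hr.le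
          linarith
        have e : (fun x : ℝ => Δ.indicator
            (fun p : ℝ × ℝ => p.1 * b₁ + p.2 * b₂ - b₁ * τ / 2) (x, y))
            = (Set.Icc 0 (τ - r * y)).indicator
              (fun x : ℝ => x * b₁ + (y * b₂ - b₁ * τ / 2)) := by
          funext x
          have hm : (x, y) ∈ Δ ↔ x ∈ Set.Icc 0 (τ - r * y) := by
            rw [hΔ]
            simp only [Set.mem_ofPred_eq, Set.mem_Icc, hy.1, hy.2, true_and, le_sub_iff_add_le]
          by_cases hx : x ∈ Set.Icc 0 (τ - r * y)
          · rw [Set.indicator_of_mem hx, Set.indicator_of_mem (hm.2 hx)]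
            ring
          · rw [Set.indicator_of_notMem hx, Set.indicator_of_notMem (fun h => hx (hm.1 h))]
        rw [e, integral_indicator measurableSet_Icc, integral_Icc_eq_integral_Ioc,
          ← intervalIntegral.integral_of_le hL, intervalIntegral.integral_add
            (Continuous.intervalIntegrable (by fun_prop) _ _)
            (Continuous.intervalIntegrable (by fun_prop) _ _),
          intervalIntegral.integral_mul_const, integral_id, intervalIntegral.integral_const,
          smul_eq_mul]
        linear_combination (-(τ - r * y) * y / 2) * hb
      · have e : (fun x : ℝ => Δ.indicator
            (fun p : ℝ × ℝ => p.1 * b₁ + p.2 * b₂ - b₁ * τ / 2) (x, y)) = fun _ => 0 := by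
          funext x
          refine Set.indicator_of_notMem (fun h => hy ?_) _
          rw [hΔ] at h
          exact ⟨h.1, h.2.1⟩
        rw [e, integral_zero]
    · rw [← Measure.volume_eq_prod]
      exact ig.integrable_indicator hmeas
  have ic : IntegrableOn (fun _ : ℝ × ℝ => b₁ * τ / 2) Δ := integrableOn_const hfin
  have i1' : IntegrableOn (fun p : ℝ × ℝ => p.1 * b₁) Δ := Integrable.mul_const i1 b₁
  have i2' : IntegrableOn (fun p : ℝ × ℝ => p.2 * b₂) Δ := Integrable.mul_const i2 b₂
  have i12 : IntegrableOn (fun p : ℝ × ℝ => p.1 * b₁ + p.2 * b₂) Δ := i1'.add i2'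
  rw [integral_sub i12 ic, integral_add i1' i2', integral_mul_const,
    integral_mul_const, setIntegral_const, smul_eq_mul, Measure.real] at key
  have hne := hpos.ne'
  field_simp
  linear_combination 2 * key
end

section
/- Let n ≥ 1, let τ > λ > 0 be real numbers, set σ = τ − λ, and let Δ = {x ∈ ℝⁿ : xᵢ ≥ 0 for all i, x₁ + ⋯ + xₙ ≤ τ, and xₙ ≤ λ}. Then the mass center of Δ is Cm(Δ) = (1/(τⁿ − σⁿ)) · ( ((τⁿ⁺¹ − σⁿ⁺¹)/(n+1)) · w − λ σⁿ · eₙ ), where w = (1, …, 1) and eₙ = (0, …, 0, 1); that is, for i < n the i-th coordinate of Cm(Δ) is (τⁿ⁺¹ − σⁿ⁺¹)/((n+1)(τⁿ − σⁿ)), while the n-th coordinate is ((τⁿ⁺¹ − σⁿ⁺¹)/(n+1) − λσⁿ)/(τⁿ − σⁿ). (Mass-center formula in the paper's Example on the one-point blow-up of ℂPⁿ.) -/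
open MeasureTheory

def simpS (n : ℕ) (t : ℝ) : Set (Fin n → ℝ) := {x | (∀ i, 0 ≤ x i) ∧ ∑ i, x i ≤ t}

def simpT {n : ℕ} (p : Fin (n + 1)) (t c : ℝ) : Set (Fin (n + 1) → ℝ) :=
  {x | (∀ i, 0 ≤ x i) ∧ ∑ i, x i ≤ t ∧ x p ≤ c}

lemma isClosed_simpS (n : ℕ) (t : ℝ) : IsClosed (simpS n t) := by
  have h : simpS n t = (⋂ i, {x : Fin n → ℝ | 0 ≤ x i}) ∩ {x | ∑ i, x i ≤ t} := by
    ext x; simp [simpS]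
  rw [h]
  exact (isClosed_iInter fun i => isClosed_le (by fun_prop) (by fun_prop)).inter
    (isClosed_le (by fun_prop) (by fun_prop))

lemma isCompact_simpS (n : ℕ) (t : ℝ) : IsCompact (simpS n t) := by
  refine (isCompact_Icc (a := fun _ : Fin n => (0 : ℝ)) (b := fun _ => t)).of_isClosed_subset
    (isClosed_simpS n t) ?_
  rintro x ⟨h0, h1⟩
  exact ⟨fun i => h0 i, fun i =>
    (Finset.single_le_sum (fun j _ => h0 j) (Finset.mem_univ i)).trans h1⟩

lemma isCompact_simpT {n : ℕ} (p : Fin (n + 1)) (t c : ℝ) : IsCompact (simpT p t c) := by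
  have h : simpT p t c = simpS (n + 1) t ∩ {x | x p ≤ c} := by
    ext x; simp [simpT, simpS, and_assoc]
  rw [h]
  exact (isCompact_simpS _ t).inter_right (isClosed_le (by fun_prop) (by fun_prop))

lemma simpS_eq {n : ℕ} (p : Fin (n + 1)) (t : ℝ) : simpS (n + 1) t = simpT p t t := by
  ext x
  simp only [simpT, simpS, Set.mem_ofPred_eq]
  constructor
  · rintro ⟨h0, h1⟩
    exact ⟨h0, h1, (Finset.single_le_sum (fun j _ => h0 j) (Finset.mem_univ p)).trans h1⟩
  · rintro ⟨h0, h1, _⟩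
    exact ⟨h0, h1⟩

lemma insert_mem {n : ℕ} (p : Fin (n + 1)) (t c s : ℝ) (y : Fin n → ℝ) :
    p.insertNth (α := fun _ => ℝ) s y ∈ simpT p t c ↔ s ∈ Set.Icc 0 c ∧ y ∈ simpS n (t - s) := by
  simp only [simpT, simpS, Set.mem_ofPred_eq, Set.mem_Icc, Fin.forall_iff_succAbove p,
    Fin.sum_univ_succAbove _ p, Fin.insertNth_apply_same, Fin.insertNth_apply_succAbove]
  constructor
  · rintro ⟨⟨a, b⟩, d, e⟩
    exact ⟨⟨a, e⟩, b, by linarith⟩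
  · rintro ⟨⟨a, b⟩, d, e⟩
    exact ⟨⟨a, d⟩, by linarith, b⟩

lemma slice {n : ℕ} (p : Fin (n + 1)) (t c : ℝ) (hc : 0 ≤ c) (f : (Fin (n + 1) → ℝ) → ℝ)
    (hf : Continuous f) :
    ∫ x in simpT p t c, f x =
      ∫ s in (0 : ℝ)..c, ∫ y in simpS n (t - s), f (p.insertNth (α := fun _ => ℝ) s y) := by
  have hm : MeasurableSet (simpT p t c) := (isCompact_simpT p t c).measurableSet
  have hint : Integrable ((simpT p t c).indicator f) := by
    rw [integrable_indicator_iff hm]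
    exact hf.continuousOn.integrableOn_compact (isCompact_simpT p t c)
  have hp := (volume_preserving_piFinSuccAbove (fun _ : Fin (n + 1) => ℝ) p).symm
  rw [← integral_indicator hm, ← hp.integral_comp', Measure.volume_eq_prod, integral_prod,
    intervalIntegral.integral_of_le hc, ← integral_Icc_eq_integral_Ioc,
    ← integral_indicator measurableSet_Icc]
  · congr 1
    ext s
    by_cases hs : s ∈ Set.Icc 0 c
    · rw [Set.indicator_of_mem hs, ← integral_indicator (isClosed_simpS _ _).measurableSet]
      congr 1
      ext y
      change (simpT p t c).indicator f (p.insertNth (α := fun _ => ℝ) s y) = _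
      by_cases hy : y ∈ simpS n (t - s)
      · rw [Set.indicator_of_mem hy, Set.indicator_of_mem ((insert_mem ..).2 ⟨hs, hy⟩)]
      · rw [Set.indicator_of_notMem hy,
          Set.indicator_of_notMem (fun h => hy ((insert_mem ..).1 h).2)]
    · rw [Set.indicator_of_notMem hs]
      refine integral_eq_zero_of_ae (Filter.Eventually.of_forall fun y => ?_)
      change (simpT p t c).indicator f (p.insertNth (α := fun _ => ℝ) s y) = _
      rw [Set.indicator_of_notMem (fun h => hs ((insert_mem ..).1 h).1)]
      rfl
  · exact hp.integrable_comp_of_integrable hint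

lemma int_pow (n : ℕ) (t c : ℝ) :
    ∫ s in (0 : ℝ)..c, (t - s) ^ n / (n.factorial : ℝ) =
      (t ^ (n + 1) - (t - c) ^ (n + 1)) / ((n + 1).factorial : ℝ) := by
  rw [intervalIntegral.integral_comp_sub_left (fun u => u ^ n / (n.factorial : ℝ)),
    intervalIntegral.integral_div, integral_pow, Nat.factorial_succ]
  push_cast
  field_simp
  simp

lemma int_mul_pow (n : ℕ) (t c : ℝ) :
    ∫ s in (0 : ℝ)..c, s * ((t - s) ^ n / (n.factorial : ℝ)) =
      ((t ^ (n + 2) - (t - c) ^ (n + 2)) / (n + 2) - c * (t - c) ^ (n + 1))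
        / ((n + 1).factorial : ℝ) := by
  have h : ∀ s : ℝ, s * ((t - s) ^ n / (n.factorial : ℝ)) =
      (fun u => t * (u ^ n / (n.factorial : ℝ)) - u ^ (n + 1) / (n.factorial : ℝ)) (t - s) := by
    intro s; simp only; ring
  simp_rw [h]
  rw [intervalIntegral.integral_comp_sub_left
      (fun u => t * (u ^ n / (n.factorial : ℝ)) - u ^ (n + 1) / (n.factorial : ℝ)),
    intervalIntegral.integral_sub ((by fun_prop : Continuous _).intervalIntegrable _ _)
      ((by fun_prop : Continuous _).intervalIntegrable _ _),
    intervalIntegral.integral_const_mul,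
    intervalIntegral.integral_div, intervalIntegral.integral_div, integral_pow, integral_pow,
    Nat.factorial_succ]
  have : (n.factorial : ℝ) ≠ 0 := by positivity
  have h1 : (n + 1 : ℝ) ≠ 0 := by positivity
  have h2 : (n + 2 : ℝ) ≠ 0 := by positivity
  have h3 : (n + 1 + 1 : ℝ) ≠ 0 := by positivity
  push_cast
  field_simp
  ring

lemma vol_simpS (n : ℕ) : ∀ t : ℝ, 0 ≤ t →
    ∫ _ in simpS n t, (1 : ℝ) = t ^ n / (n.factorial : ℝ) := by
  induction n with
  | zero =>
    intro t ht
    have : simpS 0 t = Set.univ := by ext x; simp [simpS, ht]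
    simp [this, Measure.real, volume_pi, Measure.pi_of_empty]
  | succ n ih =>
    intro t ht
    rw [simpS_eq 0 t, slice 0 t t ht _ continuous_const]
    rw [intervalIntegral.integral_congr (g := fun s => (t - s) ^ n / (n.factorial : ℝ)), int_pow]
    · simp
    · intro s hs
      rw [Set.uIcc_of_le ht] at hs
      exact ih _ (by linarith [hs.2])

lemma vol_simpT {n : ℕ} (p : Fin (n + 1)) (t c : ℝ) (hc : 0 ≤ c) (hct : c ≤ t) :
    ∫ _ in simpT p t c, (1 : ℝ) =
      (t ^ (n + 1) - (t - c) ^ (n + 1)) / ((n + 1).factorial : ℝ) := by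
  rw [slice p t c hc _ continuous_const, ← int_pow]
  refine intervalIntegral.integral_congr fun s hs => ?_
  rw [Set.uIcc_of_le hc] at hs
  exact vol_simpS n _ (by linarith [hs.2])

lemma mom_simpT {n : ℕ} (p : Fin (n + 1)) (t c : ℝ) (hc : 0 ≤ c) (hct : c ≤ t) :
    ∫ x in simpT p t c, x p =
      ((t ^ (n + 2) - (t - c) ^ (n + 2)) / (n + 2) - c * (t - c) ^ (n + 1))
        / ((n + 1).factorial : ℝ) := by
  rw [slice p t c hc _ (continuous_apply p), ← int_mul_pow]
  refine intervalIntegral.integral_congr fun s hs => ?_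
  rw [Set.uIcc_of_le hc] at hs
  simp only [Fin.insertNth_apply_same]
  rw [← vol_simpS n (t - s) (by linarith [hs.2]), ← integral_const_mul]
  simp

lemma mom_simpS {n : ℕ} (p : Fin (n + 1)) (t : ℝ) (ht : 0 ≤ t) :
    ∫ x in simpS (n + 1) t, x p = t ^ (n + 2) / ((n + 2).factorial : ℝ) := by
  rw [simpS_eq p, mom_simpT p t t ht le_rfl, Nat.factorial_succ (n + 1)]
  have h3 : (n + 1 + 1 : ℝ) = n + 2 := by ring
  push_cast
  rw [h3, sub_self, zero_pow (by omega), zero_pow (by omega)]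
  field_simp
  ring

lemma mom_simpT_other {n : ℕ} (p : Fin (n + 2)) (j : Fin (n + 1)) (t c : ℝ)
    (hc : 0 ≤ c) (hct : c ≤ t) :
    ∫ x in simpT p t c, x (p.succAbove j) =
      (t ^ (n + 3) - (t - c) ^ (n + 3)) / ((n + 3).factorial : ℝ) := by
  rw [slice p t c hc _ (continuous_apply _), ← int_pow]
  refine intervalIntegral.integral_congr fun s hs => ?_
  rw [Set.uIcc_of_le hc] at hs
  simp only [Fin.insertNth_apply_succAbove]
  exact mom_simpS j _ (by linarith [hs.2])


/-- Mass center of the truncated simplex (moment polytope of the one-point blow-up of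
`ℂPⁿ`): for `i < n` the `i`-th coordinate is `(τⁿ⁺¹ - σⁿ⁺¹)/((n+1)(τⁿ - σⁿ))`, while the
`n`-th coordinate is `((τⁿ⁺¹ - σⁿ⁺¹)/(n+1) - λσⁿ)/(τⁿ - σⁿ)`, where `σ = τ - λ`. -/
theorem stmt12 {n : ℕ} (hn : 1 ≤ n) (τ lam σ : ℝ) (hlam : 0 < lam) (hτ : lam < τ)
    (hσ : σ = τ - lam)
    (Δ : Set (Fin n → ℝ))
    (hΔ : Δ = {x : Fin n → ℝ | (∀ i, 0 ≤ x i) ∧ ∑ i, x i ≤ τ ∧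
      x ⟨n - 1, by omega⟩ ≤ lam}) :
    (∀ i : Fin n, (i : ℕ) ≠ n - 1 →
      (∫ x in Δ, x i) / (volume Δ).toReal
        = (τ ^ (n + 1) - σ ^ (n + 1)) / ((n + 1) * (τ ^ n - σ ^ n)))
    ∧ (∫ x in Δ, x ⟨n - 1, by omega⟩) / (volume Δ).toReal
        = ((τ ^ (n + 1) - σ ^ (n + 1)) / (n + 1) - lam * σ ^ n) / (τ ^ n - σ ^ n) := by
  obtain ⟨m, rfl⟩ : ∃ m, n = m + 1 := ⟨n - 1, by omega⟩
  have hΔ' : Δ = simpT (Fin.last m) τ lam := hΔ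
  have hV : (volume Δ).toReal = (τ ^ (m + 1) - σ ^ (m + 1)) / ((m + 1).factorial : ℝ) := by
    rw [hσ, ← vol_simpT (Fin.last m) τ lam hlam.le hτ.le, hΔ']
    simp [Measure.real]
  have hpos : 0 < τ ^ (m + 1) - σ ^ (m + 1) :=
    sub_pos.2 (pow_lt_pow_left₀ (by linarith) (by linarith) (by omega))
  have hfac : ((m + 1).factorial : ℝ) ≠ 0 := by positivity
  have hm2 : (m + 2 : ℝ) ≠ 0 := by positivity
  have hm2' : (m + 1 + 1 : ℝ) ≠ 0 := by positivity
  have hne := hpos.ne'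
  rw [hV]
  constructor
  · intro i hi
    have hi' : i ≠ Fin.last m := fun h => hi (by simp [h])
    obtain ⟨j, rfl⟩ := Fin.exists_succAbove_eq hi'
    cases m with
    | zero => exact j.elim0
    | succ k =>
      rw [hΔ', mom_simpT_other _ j τ lam hlam.le hτ.le, ← hσ, Nat.factorial_succ (k + 2)]
      push_cast at *
      field_simp
      ring
  · have h := mom_simpT (Fin.last m) τ lam hlam.le hτ.le
    rw [← hΔ', ← hσ] at h
    change (∫ x in Δ, x (Fin.last m)) / _ = _
    rw [h]
    push_cast
    field_simp
    ring
end

section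
/- Let n ≥ 1, let τ > λ > 0 be real numbers, set σ = τ − λ, and let Δ = {x ∈ ℝⁿ : xᵢ ≥ 0 for all i, x₁ + ⋯ + xₙ ≤ τ, and xₙ ≤ λ}. For every b = (b₁, …, bₙ) ∈ ℝⁿ satisfying n·bₙ = b₁ + ⋯ + b_{n−1} (a mass linear pair), the inner product of the mass center of Δ with b equals ⟨Cm(Δ), b⟩ = bₙ · (τⁿ⁺¹ − σⁿ⁺¹ − λσⁿ)/(τⁿ − σⁿ). (This is equation (langerm) in the paper's Example on the one-point blow-up of ℂPⁿ: if this quantity is not an integer, the loop φ_b is not contractible in the Hamiltonian group.) -/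
open MeasureTheory

/-- linear part of the swap of `x i` with the slack variable -/
noncomputable def swapLin {n : ℕ} (i : Fin n) : (Fin n → ℝ) →ₗ[ℝ] (Fin n → ℝ) where
  toFun x := Function.update x i (- ∑ j, x j)
  map_add' x y := by
    ext k
    by_cases h : k = i
    · subst h
      simp [Finset.sum_add_distrib]
      ring
    · simp [h]
  map_smul' c x := by
    ext k
    by_cases h : k = i
    · subst h
      simp [Finset.mul_sum]
    · simp [h]

theorem sum_update_slack {n : ℕ} (i : Fin n) (x : Fin n → ℝ) (t : ℝ) :
    ∑ j, Function.update x i (t - ∑ j, x j) j = t - x i := by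
  rw [Finset.sum_update_of_mem (Finset.mem_univ i)]
  have := Finset.sum_sdiff (f := x) (Finset.subset_univ {i})
  simp only [Finset.sum_singleton] at this
  linarith

theorem slack_invol {n : ℕ} (i : Fin n) (t : ℝ) :
    Function.Involutive (fun x : Fin n → ℝ => Function.update x i (t - ∑ j, x j)) := by
  intro x
  simp only [sum_update_slack]
  simp

theorem swapLin_det {n : ℕ} (i : Fin n) : |LinearMap.det (swapLin i)| = 1 := by
  have h : swapLin i * swapLin i = 1 := by
    ext1 x
    refine LinearMap.ext fun y => ?_
    have := slack_invol i 0 (Pi.single x y)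
    simpa [swapLin] using this
  have h2 := congrArg LinearMap.det h
  rw [map_mul, map_one] at h2
  rw [← abs_one, ← sq_eq_sq_iff_abs_eq_abs]
  nlinarith

theorem slack_mp {n : ℕ} (i : Fin n) (t : ℝ) :
    MeasurePreserving (fun x : Fin n → ℝ => Function.update x i (t - ∑ j, x j))
      volume volume := by
  have hd := swapLin_det i
  have hL : MeasurePreserving (swapLin i : (Fin n → ℝ) → (Fin n → ℝ)) volume volume := by
    refine ⟨(LinearMap.continuous_of_finiteDimensional _).measurable, ?_⟩
    rw [Real.map_linearMap_volume_pi_eq_smul_volume_pi]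
    · rw [abs_inv, hd]; simp
    · intro h; rw [h] at hd; simp at hd
  have hT := measurePreserving_add_left (volume : Measure (Fin n → ℝ)) (Pi.single i t)
  convert hT.comp hL using 1
  ext x k
  by_cases h : k = i
  · subst h
    simp [swapLin]
    ring
  · simp [swapLin, h]

theorem slack_emb {n : ℕ} (i : Fin n) (t : ℝ) :
    MeasurableEmbedding (fun x : Fin n → ℝ => Function.update x i (t - ∑ j, x j)) := by
  let e : (Fin n → ℝ) ≃ᵐ (Fin n → ℝ) :=
    { toEquiv := (slack_invol i t).toPerm
      measurable_toFun := (slack_mp i t).measurable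
      measurable_invFun := (slack_mp i t).measurable }
  exact e.measurableEmbedding

/-- For the truncated simplex `Δ` (moment polytope of the one-point blow-up of `ℂPⁿ`) and
a mass linear vector `b` with `n·bₙ = b₁ + ⋯ + b_{n-1}`, the inner product of the mass
center of `Δ` with `b` equals `bₙ (τⁿ⁺¹ - σⁿ⁺¹ - λσⁿ)/(τⁿ - σⁿ)`, where `σ = τ - λ`. -/
theorem stmt13 {n : ℕ} (hn : 1 ≤ n) (τ lam σ : ℝ) (hlam : 0 < lam) (hτ : lam < τ)
    (hσ : σ = τ - lam)
    (Δ : Set (Fin n → ℝ))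
    (hΔ : Δ = {x : Fin n → ℝ | (∀ i, 0 ≤ x i) ∧ ∑ i, x i ≤ τ ∧
      x ⟨n - 1, by omega⟩ ≤ lam})
    (b : Fin n → ℝ)
    (hb : (n : ℝ) * b ⟨n - 1, by omega⟩
      = ∑ i ∈ Finset.univ.filter (fun i : Fin n => (i : ℕ) ≠ n - 1), b i) :
    ∑ i : Fin n, ((∫ x in Δ, x i) / (volume Δ).toReal) * b i
      = b ⟨n - 1, by omega⟩
        * (τ ^ (n + 1) - σ ^ (n + 1) - lam * σ ^ n) / (τ ^ n - σ ^ n) := by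
  have hTmem : ∀ i : Fin n, (i : ℕ) ≠ n - 1 →
      (fun x : Fin n → ℝ => Function.update x i (τ - ∑ j, x j)) ⁻¹' Δ = Δ := by
    intro i hi
    have key : ∀ x ∈ Δ, Function.update x i (τ - ∑ j, x j) ∈ Δ := by
      intro x hx
      rw [hΔ] at hx ⊢
      obtain ⟨h0, h1, h2⟩ := hx
      refine ⟨fun k => ?_, ?_, ?_⟩
      · by_cases h : k = i
        · subst h
          simpa using h1
        · simpa [h] using h0 k
      · rw [sum_update_slack]
        linarith [h0 i]
      · rw [Function.update_of_ne]
        · exact h2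
        · intro h
          exact hi (by rw [← h])
    ext x
    constructor
    · intro hx
      have := key _ hx
      have hinv := slack_invol i τ x
      simp only at hinv this
      rwa [hinv] at this
    · exact key x
  have hclosed : IsClosed Δ := by
    rw [hΔ]
    simp only [Set.ofPred_and, Set.ofPred_forall]
    refine IsClosed.inter (isClosed_iInter fun i => isClosed_le (by fun_prop) (by fun_prop))
      (IsClosed.inter (isClosed_le (by fun_prop) (by fun_prop))
        (isClosed_le (by fun_prop) (by fun_prop)))
  have hsub : Δ ⊆ Set.Icc 0 (fun _ => τ) := by
    intro x hx
    rw [hΔ] at hx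
    obtain ⟨h0, h1, h2⟩ := hx
    exact ⟨h0, fun k => (Finset.single_le_sum (fun i _ => h0 i) (Finset.mem_univ k)).trans h1⟩
  have hcomp : IsCompact Δ := isCompact_Icc.of_isClosed_subset hclosed hsub
  have hint : ∀ i : Fin n, IntegrableOn (fun x : Fin n → ℝ => x i) Δ :=
    fun i => (continuous_apply i).continuousOn.integrableOn_compact hcomp
  have hnpos : (0 : ℝ) < n := by exact_mod_cast hn
  have hτ0 : 0 < τ := hlam.trans hτ
  have hvpos : 0 < (volume Δ).toReal := by
    refine ENNReal.toReal_pos ?_ hcomp.measure_lt_top.ne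
    set ε := min lam (τ / n) with hε
    have hε0 : 0 < ε := lt_min hlam (by positivity)
    have hs : Set.pi Set.univ (fun _ : Fin n => Set.Ioo 0 ε) ⊆ Δ := by
      intro x hx
      have hx' : ∀ k, 0 < x k ∧ x k < ε := fun k => hx k (Set.mem_univ k)
      rw [hΔ]
      refine ⟨fun k => (hx' k).1.le, ?_, (hx' _).2.le.trans (min_le_left _ _)⟩
      calc ∑ k, x k ≤ ∑ k : Fin n, τ / n :=
            Finset.sum_le_sum fun k _ => (hx' k).2.le.trans (min_le_right _ _)
        _ = τ := by
            simp
            field_simp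
    have ho : IsOpen (Set.pi Set.univ (fun _ : Fin n => Set.Ioo 0 ε)) :=
      isOpen_set_pi Set.finite_univ fun _ _ => isOpen_Ioo
    refine ((ho.measure_pos volume ⟨fun _ => ε / 2, fun k _ => ?_⟩).trans_le
      (measure_mono hs)).ne'
    exact ⟨by positivity, by linarith⟩
  set V := (volume Δ).toReal with hV
  set I : Fin n → ℝ := fun i => ∫ x in Δ, x i with hI
  set l : Fin n := ⟨n - 1, by omega⟩ with hl
  have hA : ∀ i : Fin n, (i : ℕ) ≠ n - 1 → I i = τ * V - ∑ j, I j := by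
    intro i hi
    have h := (slack_mp i τ).setIntegral_preimage_emb (slack_emb i τ) (fun x => x i) Δ
    rw [hTmem i hi] at h
    simp only [Function.update_self] at h
    have hc : IntegrableOn (fun _ : Fin n → ℝ => τ) Δ :=
      continuousOn_const.integrableOn_compact hcomp
    rw [integral_sub hc (integrable_finsetSum _ fun j _ => hint j),
      integral_finsetSum _ (fun j _ => hint j)] at h
    rw [hI]
    simp only
    rw [← h, setIntegral_const, smul_eq_mul, mul_comm, hV]
    rfl
  have hfil : Finset.univ.filter (fun i : Fin n => (i : ℕ) ≠ n - 1) = Finset.univ.erase l := by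
    ext k
    simp [hl, Fin.ext_iff]
  rw [hfil] at hb
  set A := τ * V - ∑ j, I j with hAd
  have hA' : ∀ i ∈ Finset.univ.erase l, I i = A := by
    intro i hi
    refine hA i fun h => ?_
    exact (Finset.mem_erase.1 hi).1 (Fin.ext h)
  have hS : ∑ j, I j = ((n : ℝ) - 1) * A + I l := by
    rw [← Finset.sum_erase_add _ _ (Finset.mem_univ l), Finset.sum_congr rfl hA']
    simp [Finset.card_erase_of_mem, Nat.cast_sub hn]
  have hkey : (n : ℝ) * A + I l = τ * V := by linarith
  have hlhs : ∑ i : Fin n, (I i / V) * b i = b l * τ := by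
    rw [← Finset.sum_erase_add _ _ (Finset.mem_univ l),
      Finset.sum_congr rfl (fun i hi => by rw [hA' i hi]), ← Finset.mul_sum, ← hb]
    field_simp
    linear_combination b l * hkey
  have hσ0 : 0 ≤ σ := by linarith
  have hden : 0 < τ ^ n - σ ^ n :=
    sub_pos.2 (pow_lt_pow_left₀ (by linarith) hσ0 (by omega))
  rw [eq_div_iff hden.ne']
  have hrw : τ ^ (n + 1) - σ ^ (n + 1) - lam * σ ^ n = τ * (τ ^ n - σ ^ n) := by
    rw [hσ]; ring
  rw [hrw]
  linear_combination (τ ^ n - σ ^ n) * hlhs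
end
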